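/- arXiv:funct-an/9612003 — 2 statements merged into one kernel-verified Lean document; each statement's English description precedes it below -/
import Mathlib

section
/- Let N ≥ 2 and let m : 𝕋 → ℂ be a measurable essentially bounded function on the circle 𝕋 (with normalized Haar measure) such that (1/N) ∑_{w : w^N = z} |m(w)|² = 1 for almost every z ∈ 𝕋, so that the operator S_m on L²(𝕋) defined by (S_m ξ)(z) = m(z) ξ(z^N) is an isometry. Then the subspace P_U L²(𝕋) := ⋂_{k≥1} S_m^k(L²(𝕋)) corresponding to the unitary part of the Wold decomposition of S_m has dimension at most 1. Moreover, its dimension equals 1 if and only if both of the following hold: (i) |m(z)| = 1 for almost every z ∈ 𝕋, and (ii) there exist a measurable function ξ : 𝕋 → 𝕋 and a scalar λ ∈ 𝕋 such that m(z) ξ(z^N) = λ ξ(z) for almost every z ∈ 𝕋; in that case the subspace equals ℂ·ξ. In short, S_m is a shift (i.e., ⋂_k S_m^k(L²(𝕋)) = {0}) if and only if there is no phase factor λ ∈ 𝕋 such that λ̄·m is a coboundary for the map z ↦ z^N with values in 𝕋. -/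
open MeasureTheory Real

noncomputable section

instance : Fact (0 < 2 * Real.pi) := ⟨by positivity⟩

/-- The circle `𝕋 = ℝ/2πℤ`, written additively; the point `(t : 𝕋)` corresponds to `e^{-it}`,
and `N • z` corresponds to `z ↦ z^N`. -/
abbrev Circle2π : Type := AddCircle (2 * Real.pi)

/-- Normalized Haar (probability) measure on the circle. -/
abbrev haarT : Measure Circle2π := AddCircle.haarAddCircle


theorem mp_nsmul (M : ℕ) (hM : 0 < M) : MeasurePreserving (fun z : Circle2π => M • z) haarT haarT := by
  have : (M:ℤ) ≠ 0 := by positivity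
  simpa using Measure.measurePreserving_zsmul haarT this
theorem mp_add (t : Circle2π) : MeasurePreserving (fun z : Circle2π => z + t) haarT haarT := 
  measurePreserving_add_right haarT t

/-- average over the fibres of `z ↦ M • z` -/
def avg (M : ℕ) (h : Circle2π → ℂ) (z : Circle2π) : ℂ :=
  (1 / M : ℂ) * ∑ j : Fin M, h (z + (((j : ℕ) : ℝ) * (2 * Real.pi / M) : ℝ))

theorem avg_fourier {n : ℤ} (hn : n ≠ 0) (M : ℕ) (hM : n.natAbs < M) (z : Circle2π) :
    avg M (fourier n) z = 0 := by
  have hM0 : (M:ℂ) ≠ 0 := by norm_cast; omega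
  set r : ℂ := Complex.exp (2 * Real.pi * Complex.I * (n / M)) with hr
  have hterm : ∀ j : ℕ, (fourier n (z + ((((j : ℕ) : ℝ) * (2 * Real.pi / M) : ℝ) : Circle2π)) : ℂ)
      = fourier n z * r ^ j := by
    intro j
    have h1 : (fourier n (z + ((((j : ℕ) : ℝ) * (2 * Real.pi / M) : ℝ) : Circle2π)) : ℂ)
      = fourier n z * fourier n ((((j : ℕ) : ℝ) * (2 * Real.pi / M) : ℝ) : Circle2π) := by
      simp [fourier_apply, smul_add, AddCircle.toCircle_add]
    rw [h1, fourier_coe_apply, hr, ← Complex.exp_nat_mul]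
    congr 2
    have : (Real.pi : ℂ) ≠ 0 := by exact_mod_cast Real.pi_ne_zero
    push_cast
    field_simp
  have hrM : r ^ M = 1 := by
    rw [hr, ← Complex.exp_nat_mul, Complex.exp_eq_one_iff]
    exact ⟨n, by field_simp⟩
  have hr1 : r ≠ 1 := by
    rw [hr, Ne, Complex.exp_eq_one_iff]
    rintro ⟨k, hk⟩
    have h2 : (2 * Real.pi * Complex.I : ℂ) ≠ 0 := Complex.two_pi_I_ne_zero
    have h3 : (n / M : ℂ) = k := by
      apply mul_left_cancel₀ h2
      rw [hk]; ring
    rw [div_eq_iff hM0] at h3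
    have h4 : n = k * M := by exact_mod_cast h3
    have : k ≠ 0 := by rintro rfl; simp at h4; exact hn h4
    have h5 : n.natAbs = k.natAbs * M := by rw [h4]; simp [Int.natAbs_mul]
    have : 1 ≤ k.natAbs := by omega
    nlinarith
  unfold avg
  simp only [hterm]
  rw [← Finset.mul_sum,
    Fin.sum_univ_eq_sum_range (fun j => r ^ j) M, geom_sum_eq hr1, hrM]
  simp

theorem integral_fourier' {n : ℤ} (hn : n ≠ 0) : ∫ z, (fourier n z : ℂ) ∂haarT = 0 := 
  integral_eq_zero_of_add_right_eq_neg (μ := haarT)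
    (fourier_add_half_inv_index hn Fact.out)

theorem avg_span (g : C(Circle2π, ℂ)) (hg : g ∈ Submodule.span ℂ (Set.range (@fourier (2 * Real.pi)))) :
    ∃ M0 : ℕ, ∀ M, M0 ≤ M → ∀ z, avg M g z = ∫ z, g z ∂haarT := by
  induction hg using Submodule.span_induction with
  | mem x hx =>
    obtain ⟨n, rfl⟩ := hx
    by_cases hn : n = 0
    · subst hn
      refine ⟨1, fun M hM z => ?_⟩
      have : (M:ℂ) ≠ 0 := by norm_cast; omega
      simp [avg, this]
    · exact ⟨n.natAbs + 1, fun M hM z => by rw [avg_fourier hn M hM, integral_fourier' hn]⟩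
  | zero => exact ⟨0, fun M _ z => by simp [avg]⟩
  | add x y _ _ hx hy =>
    obtain ⟨a, ha⟩ := hx
    obtain ⟨b, hb⟩ := hy
    refine ⟨max a b, fun M hM z => ?_⟩
    have e : ∫ z, (x + y) z ∂haarT = ∫ z, x z ∂haarT + ∫ z, y z ∂haarT := by
      simp only [ContinuousMap.add_apply]
      exact integral_add (x.continuous.integrable_of_hasCompactSupport (HasCompactSupport.of_compactSpace _)) (y.continuous.integrable_of_hasCompactSupport (HasCompactSupport.of_compactSpace _))
    rw [e, ← ha M (le_trans (le_max_left _ _) hM) z, ← hb M (le_trans (le_max_right _ _) hM) z]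
    simp [avg, Finset.sum_add_distrib, mul_add]
  | smul c x _ hx =>
    obtain ⟨a, ha⟩ := hx
    refine ⟨a, fun M hM z => ?_⟩
    have e : ∫ z, (c • x) z ∂haarT = c * ∫ z, x z ∂haarT := by
      simp only [ContinuousMap.smul_apply, smul_eq_mul]
      exact integral_const_mul _ _
    rw [e, ← ha M hM z]
    simp only [avg, ContinuousMap.smul_apply, smul_eq_mul, ← Finset.mul_sum]
    ring

theorem integrable_shift {h : Circle2π → ℂ} (hh : Integrable h haarT) (t : Circle2π) :
    Integrable (fun z => h (z + t)) haarT := hh.comp_add_right t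

theorem avg_integrable {h : Circle2π → ℂ} (hh : Integrable h haarT) (M : ℕ) :
    Integrable (avg M h) haarT := by
  unfold avg
  exact (integrable_finsetSum _ (fun j _ => integrable_shift hh _)).const_mul _

theorem avg_L1 {h : Circle2π → ℂ} (hh : Integrable h haarT) (M : ℕ) :
    ∫ z, ‖avg M h z‖ ∂haarT ≤ ∫ z, ‖h z‖ ∂haarT := by
  rcases Nat.eq_zero_or_pos M with rfl | hM
  · simp [avg]; positivity
  have hM' : (M:ℝ) ≠ 0 := by positivity
  calc ∫ z, ‖avg M h z‖ ∂haarT 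
      ≤ ∫ z, (1 / M : ℝ) * ∑ j : Fin M, ‖h (z + (((j : ℕ) : ℝ) * (2 * Real.pi / M) : ℝ))‖ ∂haarT := by
        apply integral_mono (avg_integrable hh M).norm
        · exact (integrable_finsetSum _ (fun j _ => (integrable_shift hh _).norm)).const_mul _
        · intro z
          simp only [avg, norm_mul]
          gcongr
          · simp
          · exact norm_sum_le _ _
    _ = ∫ z, ‖h z‖ ∂haarT := by
        rw [integral_const_mul, integral_finsetSum _ (fun j _ => (integrable_shift hh _).norm)]
        have : ∀ t : Circle2π, ∫ z, ‖h (z + t)‖ ∂haarT = ∫ z, ‖h z‖ ∂haarT := fun t =>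
          integral_add_right_eq_self (fun z => ‖h z‖) t
        simp only [this]
        simp [hM']

theorem exact_avg {h : Circle2π → ℂ} (hh : Integrable h haarT) {ε : ℝ} (hε : 0 < ε) :
    ∃ M0 : ℕ, ∀ M, M0 ≤ M → ∫ z, ‖avg M h z - ∫ w, h w ∂haarT‖ ∂haarT ≤ ε := by
  obtain ⟨g, -, hg, hgc, hgi⟩ := hh.exists_hasCompactSupport_integral_sub_le (show 0 < ε / 4 by positivity)
  have hd := span_fourier_closure_eq_top (T := 2 * Real.pi)
  have hmem : (⟨g, hgc⟩ : C(Circle2π, ℂ)) ∈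
      (Submodule.span ℂ (Set.range (@fourier (2 * Real.pi)))).topologicalClosure := by rw [hd]; trivial
  obtain ⟨p, hp, hpd⟩ := Metric.mem_closure_iff.1 hmem (ε / 4) (by positivity)
  have hpi : Integrable p haarT :=
    p.continuous.integrable_of_hasCompactSupport (HasCompactSupport.of_compactSpace _)
  have hdist : ∀ z, ‖g z - p z‖ ≤ ε / 4 := by
    intro z
    have := (ContinuousMap.dist_apply_le_dist z).trans hpd.le
    simpa [dist_eq_norm] using this
  have hgp : ∫ z, ‖g z - p z‖ ∂haarT ≤ ε / 4 := by
    calc _ ≤ ∫ z, (ε / 4) ∂haarT := integral_mono (hgi.sub hpi).norm (integrable_const _) hdist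
      _ = _ := by simp
  have hhp : ∫ z, ‖h z - p z‖ ∂haarT ≤ ε / 2 := by
    calc _ ≤ ∫ z, (‖h z - g z‖ + ‖g z - p z‖) ∂haarT := 
          integral_mono (hh.sub hpi).norm ((hh.sub hgi).norm.add (hgi.sub hpi).norm)
            (fun z => norm_sub_le_norm_sub_add_norm_sub _ _ _)
      _ = ∫ z, ‖h z - g z‖ ∂haarT + ∫ z, ‖g z - p z‖ ∂haarT := 
          integral_add (hh.sub hgi).norm (hgi.sub hpi).norm
      _ ≤ _ := by linarith
  obtain ⟨M0, hM0⟩ := avg_span p hp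
  refine ⟨M0, fun M hM => ?_⟩
  have hint := hh.sub hpi
  have e : ∀ z, avg M h z - ∫ w, h w ∂haarT = avg M (h - p) z - ∫ w, (h - p) w ∂haarT := by
    intro z
    have e1 : ∫ w, (h - p) w ∂haarT = ∫ w, h w ∂haarT - ∫ w, p w ∂haarT := integral_sub hh hpi
    have e2 : avg M (h - p) z = avg M h z - avg M p z := by
      simp [avg, Finset.sum_sub_distrib, mul_sub]
    rw [e1, e2, hM0 M hM z]; ring
  simp only [e]
  calc _ ≤ ∫ z, (‖avg M (h - p) z‖ + ‖∫ w, (h - p) w ∂haarT‖) ∂haarT := 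
        integral_mono ((avg_integrable hint M).sub (integrable_const _)).norm
          ((avg_integrable hint M).norm.add (integrable_const _)) (fun z => norm_sub_le _ _)
    _ = ∫ z, ‖avg M (h - p) z‖ ∂haarT + ‖∫ w, (h - p) w ∂haarT‖ := by
        rw [integral_add (avg_integrable hint M).norm (integrable_const _)]; simp
    _ ≤ ∫ z, ‖(h - p) z‖ ∂haarT + ∫ z, ‖(h - p) z‖ ∂haarT := 
        add_le_add (avg_L1 hint M) (norm_integral_le_integral_norm _)
    _ ≤ ε := by simp only [Pi.sub_apply]; linarith

theorem ae_shift {P : Circle2π → Prop} (hP : ∀ᵐ z ∂haarT, P z) (t : Circle2π) :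
    ∀ᵐ z ∂haarT, P (z + t) := (mp_add t).quasiMeasurePreserving.ae hP

theorem ae_nsmul {P : Circle2π → Prop} (hP : ∀ᵐ z ∂haarT, P z) {M : ℕ} (hM : 0 < M) :
    ∀ᵐ z ∂haarT, P (M • z) := (mp_nsmul M hM).quasiMeasurePreserving.ae hP

theorem integral_comp_nsmul {E : Type*} [NormedAddCommGroup E] [NormedSpace ℝ E] {M : ℕ} (hM : 0 < M)
    {h : Circle2π → E} (hh : AEStronglyMeasurable h haarT) :
    ∫ z, h (M • z) ∂haarT = ∫ z, h z ∂haarT := by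
  have hmp := mp_nsmul M hM
  have hh' : AEStronglyMeasurable h (Measure.map (fun z : Circle2π => M • z) haarT) := by
    rwa [hmp.map_eq]
  have := integral_map hmp.aemeasurable hh'
  rw [hmp.map_eq] at this
  exact this.symm

theorem integral_avg {h : Circle2π → ℂ} (hh : Integrable h haarT) {M : ℕ} (hM : 0 < M) :
    ∫ z, avg M h z ∂haarT = ∫ z, h z ∂haarT := by
  have hM' : (M:ℂ) ≠ 0 := by exact_mod_cast hM.ne'
  unfold avg
  rw [integral_const_mul, integral_finsetSum _ (fun j _ => integrable_shift hh _)]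
  simp only [integral_add_right_eq_self]
  simp [hM']

theorem avg_congr {h hp : Circle2π → ℂ} (hh : ∀ᵐ z ∂haarT, h z = hp z) (M : ℕ) :
    ∀ᵐ z ∂haarT, avg M h z = avg M hp z := by
  have : ∀ᵐ z ∂haarT, ∀ j : Fin M, h (z + ((((j : ℕ) : ℝ) * (2 * Real.pi / M) : ℝ) : Circle2π)) =
      hp (z + ((((j : ℕ) : ℝ) * (2 * Real.pi / M) : ℝ) : Circle2π)) :=
    ae_all_iff.2 fun j => ae_shift hh _
  filter_upwards [this] with z hz
  simp only [avg, hz]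

theorem avg_mul (N M : ℕ) (hN : 0 < N) (hM : 0 < M) (h : Circle2π → ℂ) (z : Circle2π) :
    avg (N * M) h z = (1 / M : ℂ) * ∑ l : Fin M,
      avg N h (z + ((((l : ℕ) : ℝ) * (2 * Real.pi / (N * M)) : ℝ) : Circle2π)) := by
  have hN' : (N:ℝ) ≠ 0 := by positivity
  have hM' : (M:ℝ) ≠ 0 := by positivity
  have hN'' : (N:ℂ) ≠ 0 := by exact_mod_cast hN'
  have hM'' : (M:ℂ) ≠ 0 := by exact_mod_cast hM'
  simp only [avg]
  rw [← finProdFinEquiv.sum_comp, Fintype.sum_prod_type_right, ← Finset.mul_sum, ← mul_assoc]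
  congr 1
  · push_cast; field_simp
  · refine Finset.sum_congr rfl fun l _ => Finset.sum_congr rfl fun i _ => ?_
    rw [add_assoc, ← AddCircle.coe_add]
    congr 3
    simp only [finProdFinEquiv_apply_val]
    push_cast
    field_simp

theorem nsmul_shift (N : ℕ) (hN : 0 < N) (z : Circle2π) (j : ℕ) :
    N • (z + (((j : ℝ) * (2 * Real.pi / N) : ℝ) : Circle2π)) = N • z := by
  have hN' : (N:ℝ) ≠ 0 := by positivity
  rw [smul_add, ← AddCircle.coe_nsmul]
  have : N • ((j : ℝ) * (2 * Real.pi / N) : ℝ) = j • (2 * Real.pi) := by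
    simp only [nsmul_eq_mul]; field_simp
  rw [this, AddCircle.coe_nsmul, AddCircle.coe_period]
  simp

theorem avg_step (N : ℕ) (hN : 0 < N) (m : Circle2π → ℂ)
    (hiso : ∀ᵐ z ∂haarT,
      (1 / N : ℝ) * ∑ k : Fin N, ‖m (z + (((k : ℕ) : ℝ) * (2 * Real.pi / N) : ℝ))‖ ^ 2 = 1)
    (M : ℕ) (hM : 0 < M) (H : Circle2π → ℂ) :
    ∀ᵐ z ∂haarT, avg (N * M) (fun w => ((‖m w‖ ^ 2 : ℝ) : ℂ) * H (N • w)) z = avg M H (N • z) := by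
  have hN' : (N:ℝ) ≠ 0 := by positivity
  have hall : ∀ᵐ z ∂haarT, ∀ l : Fin M, _ := ae_all_iff.2 fun l : Fin M =>
    ae_shift hiso ((((l : ℕ) : ℝ) * (2 * Real.pi / (N * M)) : ℝ) : Circle2π)
  filter_upwards [hall] with z hz
  rw [avg_mul N M hN hM, avg]
  congr 1
  refine Finset.sum_congr rfl fun l _ => ?_
  have h1 := hz l
  have h2 : N • (z + ((((l : ℕ) : ℝ) * (2 * Real.pi / (N * M)) : ℝ) : Circle2π)) =
      N • z + ((((l : ℕ) : ℝ) * (2 * Real.pi / M) : ℝ) : Circle2π) := by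
    rw [smul_add, ← AddCircle.coe_nsmul]
    congr 2
    simp only [nsmul_eq_mul]; field_simp
  generalize z + ((((l : ℕ) : ℝ) * (2 * Real.pi / (N * M)) : ℝ) : Circle2π) = y at h1 h2
  rw [← h2]
  simp only [avg, nsmul_shift N hN, ← Finset.sum_mul]
  rw [← mul_assoc]
  have h3 := congrArg (fun x : ℝ => (x : ℂ)) h1
  push_cast at h3 ⊢
  rw [h3, one_mul]


theorem avg_pow (N : ℕ) (hN : 2 ≤ N) (m : Circle2π → ℂ)
    (hiso : ∀ᵐ z ∂haarT,
      (1 / N : ℝ) * ∑ k : Fin N, ‖m (z + (((k : ℕ) : ℝ) * (2 * Real.pi / N) : ℝ))‖ ^ 2 = 1)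
    (S : Lp ℂ 2 haarT →L[ℂ] Lp ℂ 2 haarT)
    (hS : ∀ ξ : Lp ℂ 2 haarT, ⇑(S ξ) =ᵐ[haarT] fun z => m z * ξ (N • z))
    (k : ℕ) (f g : Lp ℂ 2 haarT) : ∀ᵐ z ∂haarT,
    avg (N ^ k) (fun w => inner ℂ ((S ^ k) f w) ((S ^ k) g w)) z =
      inner ℂ (f (N ^ k • z)) (g (N ^ k • z)) := by
  induction k with
  | zero =>
    refine ae_of_all _ fun z => ?_
    rw [pow_zero, one_smul]
    unfold avg
    rw [Fin.sum_univ_one]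
    simp
  | succ k ih =>
    have hM : 0 < N ^ k := by positivity
    have e : ∀ᵐ w ∂haarT, inner ℂ ((S ^ (k + 1)) f w) ((S ^ (k + 1)) g w) =
        ((‖m w‖ ^ 2 : ℝ) : ℂ) * (fun w => inner ℂ ((S ^ k) f w) ((S ^ k) g w)) (N • w) := by
      rw [pow_succ']
      filter_upwards [hS ((S ^ k) f), hS ((S ^ k) g)] with w h1 h2
      simp only [mul_apply_eq_comp, h1, h2, RCLike.inner_apply, map_mul]
      push_cast
      rw [← Complex.mul_conj']
      ring
    filter_upwards [avg_congr e (N ^ (k + 1)),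
      avg_step N (by omega) m hiso (N ^ k) hM (fun w => inner ℂ ((S ^ k) f w) ((S ^ k) g w)),
      ae_nsmul ih (show 0 < N by omega)] with z h1 h2 h3
    rw [h1, pow_succ', h2, h3, ← mul_smul, mul_comm N (N ^ k)]

/-- quantitative exactness. -/
theorem exact_pow (N : ℕ) (hN : 2 ≤ N) (m : Circle2π → ℂ)
    (hiso : ∀ᵐ z ∂haarT,
      (1 / N : ℝ) * ∑ k : Fin N, ‖m (z + (((k : ℕ) : ℝ) * (2 * Real.pi / N) : ℝ))‖ ^ 2 = 1)
    (S : Lp ℂ 2 haarT →L[ℂ] Lp ℂ 2 haarT)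
    (hS : ∀ ξ : Lp ℂ 2 haarT, ⇑(S ξ) =ᵐ[haarT] fun z => m z * ξ (N • z))
    (f g : Lp ℂ 2 haarT) {ε : ℝ} (hε : 0 < ε) : ∃ k0 : ℕ, ∀ k, k0 ≤ k →
    ∀ fp gp : Lp ℂ 2 haarT, (S ^ k) fp = f → (S ^ k) gp = g →
      ∫ z, ‖inner ℂ (fp z) (gp z) - inner ℂ f g‖ ∂haarT ≤ ε := by
  obtain ⟨M0, hM0⟩ := exact_avg (L2.integrable_inner (𝕜 := ℂ) f g) hε
  refine ⟨M0, fun k hk fp gp hf hg => ?_⟩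
  have h1 := hM0 (N ^ k) (hk.trans (Nat.lt_pow_self (by omega)).le)
  have hM : 0 < N ^ k := by positivity
  have hmp := mp_nsmul (N ^ k) hM
  have h2 : ∫ z, ‖inner ℂ (fp z) (gp z) - inner ℂ f g‖ ∂haarT =
      ∫ z, ‖inner ℂ (fp (N ^ k • z)) (gp (N ^ k • z)) - inner ℂ f g‖ ∂haarT := by
    exact (integral_comp_nsmul hM ((L2.integrable_inner (𝕜 := ℂ) fp gp).sub (integrable_const _)).norm.aestronglyMeasurable).symm
  rw [h2]
  refine le_trans (le_of_eq (integral_congr_ae ?_)) h1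
  filter_upwards [avg_pow N hN m hiso S hS k fp gp] with z hz
  rw [← hz, hf, hg, L2.inner_def]

theorem norm_S (N : ℕ) (hN : 2 ≤ N) (m : Circle2π → ℂ)
    (hiso : ∀ᵐ z ∂haarT,
      (1 / N : ℝ) * ∑ k : Fin N, ‖m (z + (((k : ℕ) : ℝ) * (2 * Real.pi / N) : ℝ))‖ ^ 2 = 1)
    (S : Lp ℂ 2 haarT →L[ℂ] Lp ℂ 2 haarT)
    (hS : ∀ ξ : Lp ℂ 2 haarT, ⇑(S ξ) =ᵐ[haarT] fun z => m z * ξ (N • z))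
    (f : Lp ℂ 2 haarT) : ‖S f‖ = ‖f‖ := by
  have h := avg_pow N hN m hiso S hS 1 f f
  have hN0 : 0 < N ^ 1 := by rw [pow_one]; omega
  have e : inner ℂ (S f) (S f) = inner ℂ f f := by
    have h1 := integral_avg (L2.integrable_inner (𝕜 := ℂ) (S f) (S f)) hN0
    have h2 := integral_comp_nsmul hN0 (L2.integrable_inner (𝕜 := ℂ) f f).aestronglyMeasurable
    rw [L2.inner_def, L2.inner_def, ← h1, ← h2]
    apply integral_congr_ae
    rw [pow_one] at h ⊢
    exact h
  rw [@norm_eq_sqrt_re_inner ℂ, @norm_eq_sqrt_re_inner ℂ _ _ _ _ f, e]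

theorem mem_iff
    (S : Lp ℂ 2 haarT →L[ℂ] Lp ℂ 2 haarT)
    (f : Lp ℂ 2 haarT) :
    f ∈ (⋂ k : ℕ, Set.range ⇑(S ^ (k + 1))) ↔
      f ∈ (⨅ k : ℕ, LinearMap.range (S ^ (k + 1) : Lp ℂ 2 haarT →L[ℂ] Lp ℂ 2 haarT).toLinearMap) := by
  rw [Set.mem_iInter, Submodule.mem_iInf]
  rfl

theorem not_orth (N : ℕ) (hN : 2 ≤ N) (m : Circle2π → ℂ)
    (hiso : ∀ᵐ z ∂haarT,
      (1 / N : ℝ) * ∑ k : Fin N, ‖m (z + (((k : ℕ) : ℝ) * (2 * Real.pi / N) : ℝ))‖ ^ 2 = 1)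
    (S : Lp ℂ 2 haarT →L[ℂ] Lp ℂ 2 haarT)
    (hS : ∀ ξ : Lp ℂ 2 haarT, ⇑(S ξ) =ᵐ[haarT] fun z => m z * ξ (N • z))
    (f g : Lp ℂ 2 haarT) (hf : f ∈ (⋂ k : ℕ, Set.range ⇑(S ^ (k + 1))))
    (hg : g ∈ (⋂ k : ℕ, Set.range ⇑(S ^ (k + 1)))) (hf1 : ‖f‖ = 1) (hg1 : ‖g‖ = 1)
    (hfg : inner ℂ f g = 0) : False := by
  have hε : (0:ℝ) < 1 / 4 := by norm_num
  obtain ⟨a, ha⟩ := exact_pow N hN m hiso S hS f f hε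
  obtain ⟨b, hb⟩ := exact_pow N hN m hiso S hS g g hε
  obtain ⟨c, hc⟩ := exact_pow N hN m hiso S hS f g hε
  obtain ⟨fp, hf'⟩ := Set.mem_iInter.1 hf (a + b + c)
  obtain ⟨gp, hg'⟩ := Set.mem_iInter.1 hg (a + b + c)
  have h1 := ha (a + b + c + 1) (by omega) fp fp hf' hf'
  have h2 := hb (a + b + c + 1) (by omega) gp gp hg' hg'
  have h3 := hc (a + b + c + 1) (by omega) fp gp hf' hg'
  have ef : inner ℂ f f = 1 := by rw [inner_self_eq_norm_sq_to_K, hf1]; simp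
  have eg : inner ℂ g g = 1 := by rw [inner_self_eq_norm_sq_to_K, hg1]; simp
  rw [ef] at h1
  rw [eg] at h2
  rw [hfg] at h3
  have i1 : Integrable (fun z => ‖inner ℂ (fp z) (fp z) - 1‖) haarT := ((L2.integrable_inner (𝕜 := ℂ) fp fp).sub (integrable_const (1:ℂ))).norm
  have i2 : Integrable (fun z => ‖inner ℂ (gp z) (gp z) - 1‖) haarT := ((L2.integrable_inner (𝕜 := ℂ) gp gp).sub (integrable_const (1:ℂ))).norm
  have i3 : Integrable (fun z => ‖inner ℂ (fp z) (gp z) - 0‖) haarT := ((L2.integrable_inner (𝕜 := ℂ) fp gp).sub (integrable_const (0:ℂ))).norm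
  have h4 : ∫ z, (1:ℝ) ∂haarT ≤ ∫ z, (‖inner ℂ (fp z) (fp z) - 1‖ + ‖inner ℂ (gp z) (gp z) - 1‖
      + ‖inner ℂ (fp z) (gp z) - 0‖) ∂haarT := by
    apply integral_mono (integrable_const _) ((i1.add i2).add i3)
    intro z
    have key : ∀ u : ℂ, ‖inner ℂ u u - 1‖ = |‖u‖ ^ 2 - 1| := by
      intro u
      rw [inner_self_eq_norm_sq_to_K, ← Real.norm_eq_abs, ← Complex.norm_real]
      simp
    have key2 : ‖inner ℂ (fp z) (gp z) - 0‖ = ‖fp z‖ * ‖gp z‖ := by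
      simp [mul_comm]
    simp only [Pi.add_apply, key, key2]
    have n1 := norm_nonneg (fp z)
    have n2 := norm_nonneg (gp z)
    have a1 := neg_abs_le (‖fp z‖ ^ 2 - 1)
    have a2 := neg_abs_le (‖gp z‖ ^ 2 - 1)
    have a3 := abs_nonneg (‖fp z‖ ^ 2 - 1)
    have a4 := abs_nonneg (‖gp z‖ ^ 2 - 1)
    rcases le_total ‖fp z‖ ‖gp z‖ with h | h <;> nlinarith
  have h5 : ∫ z, (‖inner ℂ (fp z) (fp z) - 1‖ + ‖inner ℂ (gp z) (gp z) - 1‖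
      + ‖inner ℂ (fp z) (gp z) - 0‖) ∂haarT = _ := integral_add (i1.add i2) i3
  have h6 : ∫ z, (‖inner ℂ (fp z) (fp z) - 1‖ + ‖inner ℂ (gp z) (gp z) - 1‖) ∂haarT = _ :=
    integral_add i1 i2
  have h7 := h5.trans (congrArg (· + ∫ z, ‖inner ℂ (fp z) (gp z) - 0‖ ∂haarT) h6)
  rw [h7] at h4
  simp only [integral_const, probReal_univ, one_smul] at h4
  linarith

theorem one_dim (N : ℕ) (hN : 2 ≤ N) (m : Circle2π → ℂ)
    (hiso : ∀ᵐ z ∂haarT,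
      (1 / N : ℝ) * ∑ k : Fin N, ‖m (z + (((k : ℕ) : ℝ) * (2 * Real.pi / N) : ℝ))‖ ^ 2 = 1)
    (S : Lp ℂ 2 haarT →L[ℂ] Lp ℂ 2 haarT)
    (hS : ∀ ξ : Lp ℂ 2 haarT, ⇑(S ξ) =ᵐ[haarT] fun z => m z * ξ (N • z))
    (f : Lp ℂ 2 haarT) (hf : f ∈ (⋂ k : ℕ, Set.range ⇑(S ^ (k + 1)))) (hf0 : f ≠ 0) :
    (⋂ k : ℕ, Set.range ⇑(S ^ (k + 1))) = Set.range fun c : ℂ => c • f := by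
  set W := (⨅ k : ℕ, LinearMap.range (S ^ (k + 1) : Lp ℂ 2 haarT →L[ℂ] Lp ℂ 2 haarT).toLinearMap) with hW
  have hfW := (mem_iff S f).1 hf
  have hn : (‖f‖ : ℂ) ≠ 0 := by exact_mod_cast norm_ne_zero_iff.2 hf0
  ext η
  constructor
  · intro hη
    have hηW := (mem_iff S η).1 hη
    have hi : inner ℂ f f ≠ (0:ℂ) := inner_self_ne_zero.2 hf0
    set c : ℂ := inner ℂ f η / inner ℂ f f with hc
    refine ⟨c, ?_⟩
    by_contra hne
    set g := η - c • f with hg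
    have hg0 : g ≠ 0 := fun h => hne (sub_eq_zero.1 h).symm
    have hgW : g ∈ W := W.sub_mem hηW (W.smul_mem _ hfW)
    have hng : (‖g‖ : ℂ) ≠ 0 := by exact_mod_cast norm_ne_zero_iff.2 hg0
    have horth : inner ℂ f g = (0:ℂ) := by
      rw [hg, inner_sub_right, inner_smul_right, hc, div_mul_cancel₀ _ hi, sub_self]
    refine not_orth N hN m hiso S hS ((‖f‖ : ℂ)⁻¹ • f) ((‖g‖ : ℂ)⁻¹ • g)
      ((mem_iff S _).2 (W.smul_mem _ hfW)) ((mem_iff S _).2 (W.smul_mem _ hgW))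
      ?_ ?_ ?_
    · simp [norm_smul, norm_ne_zero_iff.2 hf0]
    · simp [norm_smul, norm_ne_zero_iff.2 hg0]
    · rw [inner_smul_left, inner_smul_right, horth]; simp
  · rintro ⟨c, rfl⟩
    exact (mem_iff S _).2 (W.smul_mem _ hfW)

theorem eigen (N : ℕ) (hN : 2 ≤ N) (m : Circle2π → ℂ)
    (hiso : ∀ᵐ z ∂haarT,
      (1 / N : ℝ) * ∑ k : Fin N, ‖m (z + (((k : ℕ) : ℝ) * (2 * Real.pi / N) : ℝ))‖ ^ 2 = 1)
    (S : Lp ℂ 2 haarT →L[ℂ] Lp ℂ 2 haarT)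
    (hS : ∀ ξ : Lp ℂ 2 haarT, ⇑(S ξ) =ᵐ[haarT] fun z => m z * ξ (N • z))
    (f : Lp ℂ 2 haarT) (hf : f ∈ (⋂ k : ℕ, Set.range ⇑(S ^ (k + 1)))) (hf0 : ‖f‖ = 1) :
    ∃ lam : ℂ, ‖lam‖ = 1 ∧ S f = lam • f := by
  have hne : f ≠ 0 := by rintro rfl; simp at hf0
  have hSf : S f ∈ (⋂ k : ℕ, Set.range ⇑(S ^ (k + 1))) := by
    rw [Set.mem_iInter] at hf ⊢
    intro k
    obtain ⟨y, hy⟩ := hf k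
    refine ⟨S y, ?_⟩
    rw [← hy, ← mul_apply_eq_comp, ← mul_apply_eq_comp, ← pow_succ, ← pow_succ']
  rw [one_dim N hN m hiso S hS f hf hne] at hSf
  obtain ⟨lam, hl⟩ := hSf
  refine ⟨lam, ?_, hl.symm⟩
  have := norm_S N hN m hiso S hS f
  rw [← hl] at this
  simpa [norm_smul, hf0] using this

theorem eigen_pow
    (S : Lp ℂ 2 haarT →L[ℂ] Lp ℂ 2 haarT)
    (f : Lp ℂ 2 haarT) {lam : ℂ} (hl : ‖lam‖ = 1) (h : S f = lam • f) (k : ℕ) :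
    (S ^ k) ((lam⁻¹) ^ k • f) = f := by
  have hl0 : lam ≠ 0 := by rintro rfl; simp at hl
  have : (S ^ k) f = lam ^ k • f := by
    induction k with
    | zero => simp
    | succ k ih => rw [pow_succ, mul_apply_eq_comp, h, map_smul, ih, smul_smul, pow_succ']
  rw [map_smul, this, smul_smul, ← mul_pow, inv_mul_cancel₀ hl0, one_pow, one_smul]

theorem unimod (N : ℕ) (hN : 2 ≤ N) (m : Circle2π → ℂ)
    (hiso : ∀ᵐ z ∂haarT,
      (1 / N : ℝ) * ∑ k : Fin N, ‖m (z + (((k : ℕ) : ℝ) * (2 * Real.pi / N) : ℝ))‖ ^ 2 = 1)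
    (S : Lp ℂ 2 haarT →L[ℂ] Lp ℂ 2 haarT)
    (hS : ∀ ξ : Lp ℂ 2 haarT, ⇑(S ξ) =ᵐ[haarT] fun z => m z * ξ (N • z))
    (f : Lp ℂ 2 haarT) (hf0 : ‖f‖ = 1) {lam : ℂ} (hl : ‖lam‖ = 1)
    (h : S f = lam • f) : ∀ᵐ z ∂haarT, ‖f z‖ = 1 := by
  have ef : inner ℂ f f = 1 := by rw [inner_self_eq_norm_sq_to_K, hf0]; simp
  have i1 := ((L2.integrable_inner (𝕜 := ℂ) f f).sub (integrable_const (1:ℂ))).norm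
  have h0 : ∫ z, ‖inner ℂ (f z) (f z) - 1‖ ∂haarT ≤ 0 := by
    apply le_of_forall_pos_le_add
    intro ε hε
    obtain ⟨k, hk⟩ := exact_pow N hN m hiso S hS f f hε
    have h1 := hk k le_rfl _ _ (eigen_pow S f hl h k) (eigen_pow S f hl h k)
    rw [ef] at h1
    rw [zero_add]
    refine le_trans (le_of_eq (integral_congr_ae ?_)) h1
    filter_upwards [Lp.coeFn_smul ((lam⁻¹) ^ k) f] with z hz
    simp only [hz, Pi.smul_apply, inner_self_eq_norm_sq_to_K, norm_smul, norm_pow, norm_inv, hl]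
    simp
  have h1 := (integral_eq_zero_iff_of_nonneg (fun z => norm_nonneg _) i1).1
    (le_antisymm h0 (integral_nonneg fun z => norm_nonneg _))
  filter_upwards [h1] with z hz
  simp only [Pi.zero_apply, norm_eq_zero, Pi.sub_apply, sub_eq_zero] at hz
  rw [inner_self_eq_norm_sq_to_K] at hz
  have : ‖f z‖ ^ 2 = 1 := by
    have h2 := congrArg Complex.re hz
    simpa [← Complex.ofReal_pow] using h2
  nlinarith [norm_nonneg (f z)]

theorem of_fun (N : ℕ) (m : Circle2π → ℂ)
    (S : Lp ℂ 2 haarT →L[ℂ] Lp ℂ 2 haarT)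
    (hS : ∀ ξ : Lp ℂ 2 haarT, ⇑(S ξ) =ᵐ[haarT] fun z => m z * ξ (N • z))
    (hN0 : 0 < N) (ξ : Circle2π → ℂ) (lam : ℂ) (hξ : Measurable ξ) (h1 : ∀ z, ‖ξ z‖ = 1)
    (hl : ‖lam‖ = 1) (he : ∀ᵐ z ∂haarT, m z * ξ (N • z) = lam * ξ z) :
    ∃ f : Lp ℂ 2 haarT, (⇑f =ᵐ[haarT] ξ) ∧ f ≠ 0 ∧ f ∈ (⋂ k : ℕ, Set.range ⇑(S ^ (k + 1))) := by
  have hm : MemLp ξ 2 haarT := MemLp.of_bound hξ.aestronglyMeasurable 1 (ae_of_all _ fun z => (h1 z).le)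
  have hc := hm.coeFn_toLp
  refine ⟨hm.toLp, hc, ?_, ?_⟩
  · intro h0
    rw [h0] at hc
    have : ∀ᵐ z ∂haarT, False := by
      filter_upwards [hc, Lp.coeFn_zero ℂ 2 haarT] with z hz hz'
      have := h1 z
      rw [← hz, hz'] at this
      simp at this
    exact this.exists.elim fun _ h => h
  · refine Set.mem_iInter.2 fun k => ⟨_, eigen_pow S _ hl ?_ (k + 1)⟩
    apply Lp.ext
    filter_upwards [hS hm.toLp, Lp.coeFn_smul lam hm.toLp, hc, ae_nsmul hc hN0, he] with z a b c d e
    rw [a, b, d, Pi.smul_apply, c, e, smul_eq_mul]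

theorem to_fun (N : ℕ) (hN : 2 ≤ N) (m : Circle2π → ℂ)
    (hiso : ∀ᵐ z ∂haarT,
      (1 / N : ℝ) * ∑ k : Fin N, ‖m (z + (((k : ℕ) : ℝ) * (2 * Real.pi / N) : ℝ))‖ ^ 2 = 1)
    (S : Lp ℂ 2 haarT →L[ℂ] Lp ℂ 2 haarT)
    (hS : ∀ ξ : Lp ℂ 2 haarT, ⇑(S ξ) =ᵐ[haarT] fun z => m z * ξ (N • z))
    (hne : (⋂ k : ℕ, Set.range ⇑(S ^ (k + 1))) ≠ {0}) :
    (∀ᵐ z ∂haarT, ‖m z‖ = 1) ∧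
        ∃ (ξ : Circle2π → ℂ) (lam : ℂ), Measurable ξ ∧ (∀ z, ‖ξ z‖ = 1) ∧ ‖lam‖ = 1 ∧
          ∀ᵐ z ∂haarT, m z * ξ (N • z) = lam * ξ z := by
  obtain ⟨f₀, hf₀, hf₀0⟩ : ∃ f ∈ (⋂ k : ℕ, Set.range ⇑(S ^ (k + 1))), f ≠ 0 := by
    by_contra! hcon
    refine hne (Set.eq_singleton_iff_unique_mem.2 ⟨?_, hcon⟩)
    exact Set.mem_iInter.2 fun k => ⟨0, map_zero _⟩
  set f := (‖f₀‖ : ℂ)⁻¹ • f₀ with hfd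
  have hf1 : ‖f‖ = 1 := by simp [hfd, norm_smul, norm_ne_zero_iff.2 hf₀0]
  have hf : f ∈ (⋂ k : ℕ, Set.range ⇑(S ^ (k + 1))) :=
    (mem_iff S _).2 (Submodule.smul_mem _ _ ((mem_iff S _).1 hf₀))
  obtain ⟨lam, hl, he⟩ := eigen N hN m hiso S hS f hf hf1
  have hu := unimod N hN m hiso S hS f hf1 hl he
  have hN0 : 0 < N := by omega
  have heq : ∀ᵐ z ∂haarT, m z * f (N • z) = lam * f z := by
    have a := hS f
    rw [he] at a
    filter_upwards [a, Lp.coeFn_smul lam f] with z a b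
    rw [← a, b, Pi.smul_apply, smul_eq_mul]
  refine ⟨?_, ?_⟩
  · filter_upwards [heq, hu, ae_nsmul hu hN0] with z a b c
    have := congrArg norm a
    simpa [b, c, hl] using this
  · have hfm : Measurable f := (Lp.stronglyMeasurable f).measurable
    have hx : ∀ᵐ z ∂haarT, (if ‖f z‖ = 1 then f z else 1) = f z := by
      filter_upwards [hu] with z hz
      rw [if_pos hz]
    refine ⟨fun z => if ‖f z‖ = 1 then f z else 1, lam, ?_, ?_, hl, ?_⟩
    · exact Measurable.ite (measurableSet_eq_fun hfm.norm measurable_const) hfm measurable_const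
    · intro z
      dsimp only
      split_ifs with h
      · exact h
      · simp
    · filter_upwards [heq, hx, ae_nsmul hx hN0] with z a b c
      rw [b, c, a]


/-- **Theorem 3.1.** The Wold decomposition of the isometry `(S_m ξ)(z) = m(z) ξ(z^N)`:
its unitary part is at most one-dimensional; it is one-dimensional iff `|m| = 1` a.e. and `m`
admits a unimodular eigenfunction `m(z) ξ(z^N) = λ ξ(z)`, and then the unitary subspace is `ℂ ξ`.
In short, `S_m` is a shift iff no `λ̄ m` is a coboundary for `z ↦ z^N` with values in `𝕋`. -/
theorem wold_decomposition_of_weighted_composition_isometry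
    (N : ℕ) (hN : 2 ≤ N)
    (m : Circle2π → ℂ) (hm_meas : Measurable m)
    -- the isometry condition: `(1/N) ∑_{w^N = z} |m(w)|² = 1` a.e.
    (hiso : ∀ᵐ z ∂haarT,
      (1 / N : ℝ) * ∑ k : Fin N, ‖m (z + (((k : ℕ) : ℝ) * (2 * Real.pi / N) : ℝ))‖ ^ 2 = 1)
    -- the operator `S_m` on `L²(𝕋)`
    (S : Lp ℂ 2 haarT →L[ℂ] Lp ℂ 2 haarT)
    (hS : ∀ ξ : Lp ℂ 2 haarT, ⇑(S ξ) =ᵐ[haarT] fun z => m z * ξ (N • z)) :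
    -- the unitary subspace `⋂_{k ≥ 1} S^k L²(𝕋)` is at most one-dimensional
    (∃ ξ₀ : Lp ℂ 2 haarT,
        (⋂ k : ℕ, Set.range ⇑(S ^ (k + 1))) = Set.range fun c : ℂ => c • ξ₀)
    ∧
    -- it is nonzero iff (3.12) and (3.13) hold
    ((⋂ k : ℕ, Set.range ⇑(S ^ (k + 1))) ≠ {0} ↔
      ((∀ᵐ z ∂haarT, ‖m z‖ = 1) ∧
        ∃ (ξ : Circle2π → ℂ) (lam : ℂ), Measurable ξ ∧ (∀ z, ‖ξ z‖ = 1) ∧ ‖lam‖ = 1 ∧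
          ∀ᵐ z ∂haarT, m z * ξ (N • z) = lam * ξ z))
    ∧
    -- in that case the unitary subspace is `ℂ ξ`
    (∀ (ξ : Circle2π → ℂ) (lam : ℂ), Measurable ξ → (∀ z, ‖ξ z‖ = 1) → ‖lam‖ = 1 →
      (∀ᵐ z ∂haarT, m z * ξ (N • z) = lam * ξ z) →
      ∀ η : Lp ℂ 2 haarT,
        (η ∈ ⋂ k : ℕ, Set.range ⇑(S ^ (k + 1))) ↔ ∃ c : ℂ, ⇑η =ᵐ[haarT] fun z => c * ξ z)
    ∧
    -- `S_m` is a shift iff no `λ̄ m` is a coboundary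
    ((⋂ k : ℕ, Set.range ⇑(S ^ (k + 1))) = {0} ↔
      ¬ ∃ (lam : ℂ) (Δ : Circle2π → ℂ), ‖lam‖ = 1 ∧ Measurable Δ ∧ (∀ z, ‖Δ z‖ = 1) ∧
        ∀ᵐ z ∂haarT, (starRingEnd ℂ) lam * m z = Δ z * (Δ (N • z))⁻¹) := by
  have hN0 : 0 < N := by omega
  have hback : ∀ (ξ : Circle2π → ℂ) (lam : ℂ), Measurable ξ → (∀ z, ‖ξ z‖ = 1) → ‖lam‖ = 1 →
      (∀ᵐ z ∂haarT, m z * ξ (N • z) = lam * ξ z) →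
      (⋂ k : ℕ, Set.range ⇑(S ^ (k + 1))) ≠ {0} := by
    intro ξ lam hξ h1 hl he h0
    obtain ⟨f, -, hf0, hf⟩ := of_fun N m S hS hN0 ξ lam hξ h1 hl he
    rw [h0] at hf
    exact hf0 hf
  refine ⟨?_, ?_, ?_, ?_⟩
  · by_cases h : ∃ f ∈ (⋂ k : ℕ, Set.range ⇑(S ^ (k + 1))), f ≠ 0
    · obtain ⟨f, hf, hf0⟩ := h
      exact ⟨f, one_dim N hN m hiso S hS f hf hf0⟩
    · push Not at h
      refine ⟨0, ?_⟩
      simp only [smul_zero, Set.range_const]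
      exact Set.eq_singleton_iff_unique_mem.2 ⟨Set.mem_iInter.2 fun k => ⟨0, map_zero _⟩, h⟩
  · refine ⟨to_fun N hN m hiso S hS, ?_⟩
    rintro ⟨-, ξ, lam, hξ, h1, hl, he⟩
    exact hback ξ lam hξ h1 hl he
  · intro ξ lam hξ h1 hl he η
    obtain ⟨f, hfξ, hf0, hf⟩ := of_fun N m S hS hN0 ξ lam hξ h1 hl he
    rw [one_dim N hN m hiso S hS f hf hf0]
    constructor
    · rintro ⟨c, rfl⟩
      refine ⟨c, ?_⟩
      filter_upwards [Lp.coeFn_smul c f, hfξ] with z a b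
      rw [a, Pi.smul_apply, b, smul_eq_mul]
    · rintro ⟨c, hc⟩
      refine ⟨c, Lp.ext ?_⟩
      filter_upwards [Lp.coeFn_smul c f, hfξ, hc] with z a b d
      rw [a, Pi.smul_apply, b, smul_eq_mul, d]
  · constructor
    · rintro h0 ⟨lam, Δ, hl, hΔ, h1, he⟩
      refine hback Δ lam hΔ h1 hl ?_ h0
      filter_upwards [he] with z hz
      have hD : Δ (N • z) ≠ 0 := by
        intro h
        have := h1 (N • z)
        simp [h] at this
      have hll : lam * (starRingEnd ℂ) lam = 1 := by
        rw [Complex.mul_conj', hl]; simp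
      calc m z * Δ (N • z) = lam * ((starRingEnd ℂ) lam * m z) * Δ (N • z) := by
            rw [← mul_assoc, hll, one_mul]
        _ = lam * Δ z := by rw [hz]; field_simp
    · intro hno
      by_contra hne
      obtain ⟨-, ξ, lam, hξ, h1, hl, he⟩ := to_fun N hN m hiso S hS hne
      refine hno ⟨lam, ξ, hl, hξ, h1, ?_⟩
      filter_upwards [he] with z hz
      have hD : ξ (N • z) ≠ 0 := by
        intro h
        have := h1 (N • z)
        simp [h] at this
      have hll : (starRingEnd ℂ) lam * lam = 1 := by
        rw [Complex.conj_mul', hl]; simp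
      rw [eq_mul_inv_iff_mul_eq₀ hD, mul_assoc, hz, ← mul_assoc, hll, one_mul]
end
end

section
/- Let N ≥ 2 and let m : 𝕋 → ℂ be measurable with (1/N) ∑_{w : w^N = z} |m(w)|² = 1 for almost every z, so that S_m on L²(𝕋), (S_m ξ)(z) = m(z) ξ(z^N), is an isometry. Assume that the subspace ⋂_{k≥1} S_m^k(L²(𝕋)) is nonzero, and pick ξ in this subspace with ‖ξ‖_2 = 1. Then |ξ(z)|² = lim_{k→∞} ∏_{n=0}^{k} |m(z^{N^n})|² for almost every z ∈ 𝕋, and moreover |ξ(z)| = 1 = |m(z)| for almost every z ∈ 𝕋. -/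
open MeasureTheory Real Filter

noncomputable section

lemma wc_mp (n : ℕ) (hn : n ≠ 0) : MeasurePreserving (fun z : Circle2π => n • z) haarT haarT := by
  have := Measure.measurePreserving_zsmul haarT (G := Circle2π) (n := (n : ℤ)) (by exact_mod_cast hn)
  simpa using this

lemma wc_int_fourier (M : ℕ) (n : ℤ) (hn : n ≠ 0) (hM : |n| < M) (s : Circle2π → ℂ) :
    ∫ z, fourier n z * s (M • z) ∂haarT = 0 := by
  have hM0 : (M : ℝ) ≠ 0 := by
    have : (0 : ℤ) < M := lt_of_le_of_lt (abs_nonneg n) hM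
    have : 0 < M := by exact_mod_cast this
    positivity
  set a : Circle2π := ((2 * Real.pi / M : ℝ) : Circle2π) with ha
  have hMa : M • a = 0 := by
    rw [ha, ← AddCircle.coe_nsmul, nsmul_eq_mul, mul_div_cancel₀ _ hM0]
    exact AddCircle.coe_period _
  have h1 : ∫ z, fourier n (z + a) * s (M • (z + a)) ∂haarT
      = ∫ z, fourier n z * s (M • z) ∂haarT :=
    integral_add_right_eq_self (fun z => fourier n z * s (M • z)) a
  have h2 : ∀ z : Circle2π, fourier n (z + a) * s (M • (z + a))
      = fourier n a * (fourier n z * s (M • z)) := by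
    intro z
    rw [smul_add, hMa, add_zero]
    simp only [fourier_apply, smul_add, AddCircle.toCircle_add, Circle.coe_mul]
    ring
  simp_rw [h2] at h1
  rw [integral_const_mul] at h1
  by_contra hne
  have h3 : (fourier n a : ℂ) = 1 := by
    have : ((fourier n a : ℂ) - 1) * ∫ z, fourier n z * s (M • z) ∂haarT = 0 := by
      rw [sub_mul, h1]; ring
    rcases mul_eq_zero.mp this with h | h
    · exact sub_eq_zero.mp h
    · exact absurd h hne
  rw [ha, fourier_coe_apply, Complex.exp_eq_one_iff] at h3
  obtain ⟨j, hj⟩ := h3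
  have hpi : (Real.pi : ℂ) ≠ 0 := by exact_mod_cast Real.pi_ne_zero
  have hMC : (M : ℂ) ≠ 0 := by exact_mod_cast hM0
  have hI := Complex.I_ne_zero
  push_cast at hj
  field_simp at hj
  have hj' : n = M * j := by
    exact_mod_cast hj
  have hd : (M : ℤ) ∣ n := ⟨j, hj'⟩
  have := Int.eq_zero_of_abs_lt_dvd hd hM
  exact hn this

lemma wc_int_sm {h : Circle2π → ℂ} (hh : Integrable h haarT) (M : ℕ) (s : Circle2π → ℂ)
    (hs : Measurable s) (hs1 : ∀ z, ‖s z‖ ≤ 1) :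
    Integrable (fun z => h z * s (M • z)) haarT := by
  refine hh.mul_bdd (c := 1) ?_ (ae_of_all _ fun z => hs1 _)
  exact (hs.comp (measurable_const_smul M)).aestronglyMeasurable

lemma wc_mixing_span (N : ℕ) (hN : 2 ≤ N) (q : Lp ℂ 1 haarT)
    (hq : q ∈ Submodule.span ℂ (Set.range (@fourierLp (2 * Real.pi) _ 1 _))) :
    ∃ K : ℕ, ∀ k ≥ K, ∀ s : Circle2π → ℂ, Measurable s → (∀ z, ‖s z‖ ≤ 1) →
      ∫ z, q z * s (N ^ k • z) ∂haarT = (∫ z, q z ∂haarT) * ∫ z, s z ∂haarT := by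
  induction hq using Submodule.span_induction with
  | mem x hx =>
    obtain ⟨n, rfl⟩ := hx
    refine ⟨n.natAbs, fun k hk s hs hs1 => ?_⟩
    have hc := coeFn_fourierLp (T := 2 * Real.pi) 1 n
    have e1 : ∫ z, (fourierLp 1 n : Lp ℂ 1 haarT) z * s (N ^ k • z) ∂haarT
        = ∫ z, fourier n z * s (N ^ k • z) ∂haarT := by
      refine integral_congr_ae ?_
      filter_upwards [hc] with z hz
      rw [hz]
    have e2 : ∫ z, (fourierLp 1 n : Lp ℂ 1 haarT) z ∂haarT = ∫ z, fourier n z ∂haarT :=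
      integral_congr_ae hc
    rw [e1, e2]
    have hlt : n.natAbs < N ^ k := lt_of_le_of_lt hk (Nat.lt_pow_self (by omega))
    have hlt' : |n| < ((N ^ k : ℕ) : ℤ) := by
      rw [Int.abs_eq_natAbs]; exact_mod_cast hlt
    by_cases hn : n = 0
    · subst hn
      simp only [fourier_zero, one_mul, integral_const]
      have hmp := wc_mp (N ^ k) (by positivity)
      have : ∫ z, s (N ^ k • z) ∂haarT = ∫ z, s z ∂haarT := by
        conv_rhs => rw [← hmp.map_eq]
        rw [integral_map hmp.measurable.aemeasurable hs.aestronglyMeasurable]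
      rw [this]; simp
    · rw [wc_int_fourier _ n hn hlt' s]
      have h0 := wc_int_fourier _ n hn hlt' (fun _ => 1)
      simp only [mul_one] at h0
      rw [h0, zero_mul]
  | zero =>
    refine ⟨0, fun k _ s _ _ => ?_⟩
    have hc := Lp.coeFn_zero ℂ 1 haarT
    rw [integral_congr_ae hc]
    have : ∫ z, (0 : Lp ℂ 1 haarT) z * s (N ^ k • z) ∂haarT = ∫ z, (0:ℂ) ∂haarT := by
      refine integral_congr_ae ?_
      filter_upwards [hc] with z hz
      rw [hz]; simp
    rw [this]; simp
  | add x y _ _ hx hy =>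
    obtain ⟨K1, h1⟩ := hx
    obtain ⟨K2, h2⟩ := hy
    refine ⟨max K1 K2, fun k hk s hs hs1 => ?_⟩
    have hc := Lp.coeFn_add x y
    have e1 : ∫ z, (x + y) z * s (N ^ k • z) ∂haarT
        = ∫ z, (x z * s (N ^ k • z) + y z * s (N ^ k • z)) ∂haarT := by
      refine integral_congr_ae ?_
      filter_upwards [hc] with z hz
      rw [hz, Pi.add_apply, add_mul]
    have e2 : ∫ z, (x + y) z ∂haarT = ∫ z, (x z + y z) ∂haarT := integral_congr_ae hc
    have ix := L1.integrable_coeFn x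
    have iy := L1.integrable_coeFn y
    rw [e1, e2, integral_add (wc_int_sm ix _ s hs hs1) (wc_int_sm iy _ s hs hs1),
      integral_add ix iy, h1 k (le_trans (le_max_left _ _) hk) s hs hs1,
      h2 k (le_trans (le_max_right _ _) hk) s hs hs1, add_mul]
  | smul c x _ hx =>
    obtain ⟨K1, h1⟩ := hx
    refine ⟨K1, fun k hk s hs hs1 => ?_⟩
    have hc := Lp.coeFn_smul c x
    have e1 : ∫ z, (c • x) z * s (N ^ k • z) ∂haarT
        = ∫ z, c * (x z * s (N ^ k • z)) ∂haarT := by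
      refine integral_congr_ae ?_
      filter_upwards [hc] with z hz
      rw [hz, Pi.smul_apply, smul_eq_mul, mul_assoc]
    have e2 : ∫ z, (c • x) z ∂haarT = ∫ z, c * x z ∂haarT := integral_congr_ae hc
    rw [e1, e2, integral_const_mul, integral_const_mul, h1 k hk s hs hs1, mul_assoc]

lemma wc_mixing (N : ℕ) (hN : 2 ≤ N) (h : Circle2π → ℂ) (hh : Integrable h haarT)
    (ε : ℝ) (hε : 0 < ε) :
    ∃ K : ℕ, ∀ k ≥ K, ∀ s : Circle2π → ℂ, Measurable s → (∀ z, ‖s z‖ ≤ 1) →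
      ‖∫ z, h z * s (N ^ k • z) ∂haarT - (∫ z, h z ∂haarT) * ∫ z, s z ∂haarT‖ ≤ ε := by
  set f : Lp ℂ 1 haarT := hh.toL1 h with hf
  have hmem : f ∈ closure
      (Submodule.span ℂ (Set.range (@fourierLp (2 * Real.pi) _ 1 _)) : Set (Lp ℂ 1 haarT)) := by
    have := span_fourierLp_closure_eq_top (T := 2 * Real.pi) (p := 1) (by simp)
    rw [← Submodule.topologicalClosure_coe, this]
    trivial
  obtain ⟨q, hq, hd⟩ := Metric.mem_closure_iff.mp hmem (ε / 2) (by positivity)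
  obtain ⟨K, hK⟩ := wc_mixing_span N hN q hq
  refine ⟨K, fun k hk s hs hs1 => ?_⟩
  have iq := L1.integrable_coeFn q
  have hdist : ∫ z, ‖h z - q z‖ ∂haarT < ε / 2 := by
    rw [dist_eq_norm, L1.norm_eq_integral_norm] at hd
    refine lt_of_eq_of_lt (integral_congr_ae ?_) hd
    filter_upwards [Lp.coeFn_sub f q, hh.coeFn_toL1] with z h1 h2
    rw [h1, Pi.sub_apply, h2]
  have e : ∫ z, h z * s (N ^ k • z) ∂haarT - (∫ z, h z ∂haarT) * ∫ z, s z ∂haarT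
      = ∫ z, (h z - q z) * s (N ^ k • z) ∂haarT - (∫ z, (h z - q z) ∂haarT) * ∫ z, s z ∂haarT := by
    simp_rw [sub_mul]
    rw [integral_sub (wc_int_sm hh _ s hs hs1) (wc_int_sm iq _ s hs hs1), integral_sub hh iq,
      hK k hk s hs hs1]
    ring
  have b1 : ‖∫ z, (h z - q z) * s (N ^ k • z) ∂haarT‖ ≤ ∫ z, ‖h z - q z‖ ∂haarT := by
    refine norm_integral_le_of_norm_le (hh.sub iq).norm (ae_of_all _ fun z => ?_)
    rw [norm_mul]
    exact mul_le_of_le_one_right (norm_nonneg _) (hs1 _)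
  have b2 : ‖∫ z, (h z - q z) ∂haarT‖ ≤ ∫ z, ‖h z - q z‖ ∂haarT := norm_integral_le_integral_norm _
  have b3 : ‖∫ z, s z ∂haarT‖ ≤ 1 := by
    have := norm_integral_le_of_norm_le_const (μ := haarT) (ae_of_all _ hs1)
    simpa using this
  rw [e]
  refine (norm_sub_le _ _).trans ?_
  rw [norm_mul]
  have b4 : ‖∫ z, (h z - q z) ∂haarT‖ * ‖∫ z, s z ∂haarT‖ ≤ ‖∫ z, (h z - q z) ∂haarT‖ :=
    mul_le_of_le_one_right (norm_nonneg _) b3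
  linarith

lemma wc_mixing_real (N : ℕ) (hN : 2 ≤ N) (h : Circle2π → ℝ) (hh : Integrable h haarT)
    (ε : ℝ) (hε : 0 < ε) :
    ∃ K : ℕ, ∀ k ≥ K, ∀ s : Circle2π → ℝ, Measurable s → (∀ z, |s z| ≤ 1) →
      |∫ z, h z * s (N ^ k • z) ∂haarT - (∫ z, h z ∂haarT) * ∫ z, s z ∂haarT| ≤ ε := by
  obtain ⟨K, hK⟩ := wc_mixing N hN (fun z => (h z : ℂ)) hh.ofReal ε hε
  refine ⟨K, fun k hk s hs hs1 => ?_⟩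
  have := hK k hk (fun z => (s z : ℂ)) (Complex.measurable_ofReal.comp hs)
    (fun z => by simpa using hs1 z)
  simp_rw [← Complex.ofReal_mul] at this
  rw [integral_complex_ofReal, integral_complex_ofReal, integral_complex_ofReal,
    ← Complex.ofReal_mul, ← Complex.ofReal_sub, Complex.norm_real] at this
  exact this

def wcP (N : ℕ) (m : Circle2π → ℂ) (k : ℕ) (z : Circle2π) : NNReal :=
  ∏ n ∈ Finset.range k, ‖m ((N ^ n : ℕ) • z)‖₊ ^ 2

lemma wcP_meas (N : ℕ) (m : Circle2π → ℂ) (hm : Measurable m) (k : ℕ) : Measurable (wcP N m k) := by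
  unfold wcP
  refine Finset.measurable_fun_prod _ fun n _ => ?_
  exact ((hm.comp (measurable_const_smul (N ^ n))).nnnorm).pow_const 2

lemma wcP_succ (N : ℕ) (m : Circle2π → ℂ) (k : ℕ) (z : Circle2π) :
    wcP N m (k + 1) z = ‖m z‖₊ ^ 2 * wcP N m k (N • z) := by
  unfold wcP
  rw [Finset.prod_range_succ', mul_comm]
  simp only [pow_zero, one_smul, pow_succ, mul_smul]

lemma wc_base (N : ℕ) (hN : 2 ≤ N) (m : Circle2π → ℂ) (hm_meas : Measurable m)
    (hiso : ∀ᵐ z ∂haarT,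
      (1 / N : ℝ) * ∑ k : Fin N, ‖m (z + (((k : ℕ) : ℝ) * (2 * Real.pi / N) : ℝ))‖ ^ 2 = 1)
    (φ : Circle2π → ENNReal) (hφ : Measurable φ) :
    ∫⁻ z, (‖m z‖₊ ^ 2 : NNReal) * φ (N • z) ∂haarT = ∫⁻ z, φ z ∂haarT := by
  have hN0 : (N : ℝ) ≠ 0 := by positivity
  have hmp := wc_mp N (by omega)
  set F : Circle2π → ENNReal := fun z => (‖m z‖₊ ^ 2 : NNReal) * φ (N • z) with hF
  have hFm : Measurable F := by
    refine Measurable.mul ?_ (hφ.comp hmp.measurable)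
    exact (hm_meas.nnnorm.pow_const 2).coe_nnreal_ennreal
  set a : Fin N → Circle2π := fun k => ((((k : ℕ) : ℝ) * (2 * Real.pi / N) : ℝ) : Circle2π) with ha
  have hNa : ∀ k, N • a k = 0 := by
    intro k
    simp only [ha]
    rw [← AddCircle.coe_nsmul, nsmul_eq_mul]
    have : (N : ℝ) * ((k : ℕ) * (2 * Real.pi / N)) = (k : ℕ) • (2 * Real.pi) := by
      rw [nsmul_eq_mul]; field_simp
    rw [this, AddCircle.coe_nsmul, AddCircle.coe_period, smul_zero]
  have h1 : ∑ k : Fin N, ∫⁻ z, F (z + a k) ∂haarT = N * ∫⁻ z, F z ∂haarT := by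
    simp_rw [lintegral_add_right_eq_self F]
    simp
  have h2 : ∑ k : Fin N, ∫⁻ z, F (z + a k) ∂haarT = N * ∫⁻ z, φ z ∂haarT := by
    rw [← lintegral_finsetSum (f := fun k z => F (z + a k)) _
      (fun k _ => hFm.comp (measurable_add_const (a k)))]
    rw [← hmp.lintegral_comp hφ, 
      ← lintegral_const_mul (f := fun z => φ (N • z)) _ (hφ.comp hmp.measurable)]
    refine lintegral_congr_ae ?_
    filter_upwards [hiso] with z hz
    simp only [hF, smul_add, hNa, add_zero]
    rw [← Finset.sum_mul, ← ENNReal.ofNNReal_finsetSum]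
    congr 1
    have : ∑ k : Fin N, ‖m (z + a k)‖₊ ^ 2 = (N : NNReal) := by
      rw [← NNReal.coe_inj]
      push_cast
      rw [one_div, inv_mul_eq_iff_eq_mul₀ hN0, mul_one] at hz
      exact hz
    rw [this]; simp
  rw [h1] at h2
  exact (ENNReal.mul_right_inj (by simp; omega) (by simp)).mp h2

lemma wcP_lint (N : ℕ) (hN : 2 ≤ N) (m : Circle2π → ℂ) (hm_meas : Measurable m)
    (hiso : ∀ᵐ z ∂haarT,
      (1 / N : ℝ) * ∑ k : Fin N, ‖m (z + (((k : ℕ) : ℝ) * (2 * Real.pi / N) : ℝ))‖ ^ 2 = 1)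
    (k : ℕ) (φ : Circle2π → ENNReal) (hφ : Measurable φ) :
    ∫⁻ z, wcP N m k z * φ (N ^ k • z) ∂haarT = ∫⁻ z, φ z ∂haarT := by
  induction k with
  | zero => simp [wcP]
  | succ k ih =>
    rw [← ih, ← wc_base N hN m hm_meas hiso (fun z => wcP N m k z * φ (N ^ k • z))]
    · refine lintegral_congr fun z => ?_
      rw [wcP_succ, pow_succ N k, mul_smul, ENNReal.coe_mul, mul_assoc]
    · exact (wcP_meas N m hm_meas k).coe_nnreal_ennreal.mul
        (hφ.comp (measurable_const_smul (N ^ k)))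

lemma wcP_mp (N : ℕ) (hN : 2 ≤ N) (m : Circle2π → ℂ) (hm_meas : Measurable m)
    (hiso : ∀ᵐ z ∂haarT,
      (1 / N : ℝ) * ∑ k : Fin N, ‖m (z + (((k : ℕ) : ℝ) * (2 * Real.pi / N) : ℝ))‖ ^ 2 = 1)
    (k : ℕ) :
    MeasurePreserving (fun z : Circle2π => N ^ k • z)
      (haarT.withDensity (fun z => (wcP N m k z : ENNReal))) haarT := by
  have hT : Measurable (fun z : Circle2π => N ^ k • z) := measurable_const_smul (N ^ k)
  refine ⟨hT, ?_⟩
  refine Measure.ext_of_lintegral _ fun φ hφ => ?_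
  rw [lintegral_map hφ hT, lintegral_withDensity_eq_lintegral_mul _
    (wcP_meas N m hm_meas k).coe_nnreal_ennreal (g := fun z => φ (N ^ k • z)) (hφ.comp hT)]
  exact wcP_lint N hN m hm_meas hiso k φ hφ

lemma wc_D (N : ℕ) (hN : 2 ≤ N) (m : Circle2π → ℂ) (hm_meas : Measurable m)
    (hiso : ∀ᵐ z ∂haarT,
      (1 / N : ℝ) * ∑ k : Fin N, ‖m (z + (((k : ℕ) : ℝ) * (2 * Real.pi / N) : ℝ))‖ ^ 2 = 1)
    (k : ℕ) (h G : Circle2π → ℝ) (hh : Integrable h haarT) (h1 : ∫ z, h z ∂haarT = 1)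
    (hG : Measurable G) (hhG : ∀ᵐ z ∂haarT, h z = wcP N m k z * G (N ^ k • z))
    (ε : ℝ)
    (hmix : ∀ s : Circle2π → ℝ, Measurable s → (∀ z, |s z| ≤ 1) →
      |∫ z, h z * s (N ^ k • z) ∂haarT - (∫ z, h z ∂haarT) * ∫ z, s z ∂haarT| ≤ ε) :
    ∫⁻ z, ‖h z - wcP N m k z‖ₑ ∂haarT ≤ ENNReal.ofReal ε ∧
      ∫⁻ z, ‖G z - 1‖ₑ ∂haarT ≤ ENNReal.ofReal ε := by
  have hmp := wcP_mp N hN m hm_meas hiso k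
  have hPm := wcP_meas N m hm_meas k
  have hGi : Integrable G haarT := by
    rw [← hmp.integrable_comp hG.aestronglyMeasurable,
      integrable_withDensity_iff_integrable_smul hPm]
    refine hh.congr ?_
    filter_upwards [hhG] with z hz
    rw [hz]; rfl
  set s : Circle2π → ℝ := fun z => if 1 ≤ G z then 1 else -1 with hs
  have hsm : Measurable s :=
    Measurable.ite (measurableSet_le measurable_const hG) measurable_const measurable_const
  have hs1 : ∀ z, |s z| ≤ 1 := by
    intro z; simp only [hs]; split_ifs <;> simp
  have hGs : Integrable (fun z => G z * s z) haarT :=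
    hGi.mul_bdd (c := 1) hsm.aestronglyMeasurable (ae_of_all _ hs1)
  have hsi : Integrable s haarT :=
    (integrable_const (1 : ℝ)).mono' hsm.aestronglyMeasurable (ae_of_all _ hs1)
  have e1 : ∫ z, h z * s (N ^ k • z) ∂haarT = ∫ z, G z * s z ∂haarT := by
    conv_rhs => rw [← hmp.map_eq]
    rw [integral_map hmp.measurable.aemeasurable (by
      exact (hG.mul hsm).aestronglyMeasurable), integral_withDensity_eq_integral_smul hPm]
    refine integral_congr_ae ?_
    filter_upwards [hhG] with z hz
    rw [hz, NNReal.smul_def, smul_eq_mul, mul_assoc]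
  have e2 : ∫ z, ‖G z - 1‖ ∂haarT = ∫ z, h z * s (N ^ k • z) ∂haarT
      - (∫ z, h z ∂haarT) * ∫ z, s z ∂haarT := by
    rw [e1, h1, one_mul, ← integral_sub hGs hsi]
    refine integral_congr_ae (ae_of_all _ fun z => ?_)
    simp only [hs, Real.norm_eq_abs]
    split_ifs with hz
    · rw [abs_of_nonneg (by linarith)]; ring
    · rw [abs_of_neg (by linarith)]; ring
  have b : ∫⁻ z, ‖G z - 1‖ₑ ∂haarT ≤ ENNReal.ofReal ε := by
    rw [← ofReal_integral_norm_eq_lintegral_enorm (f := fun z => G z - 1) (hGi.sub (integrable_const (1 : ℝ)))]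
    refine ENNReal.ofReal_le_ofReal ?_
    rw [e2]
    exact (le_abs_self _).trans (hmix s hsm hs1)
  refine ⟨?_, b⟩
  have hm1 : Measurable fun z => ‖G z - 1‖ₑ := (hG.sub_const 1).enorm
  rw [← wcP_lint N hN m hm_meas hiso k _ hm1] at b
  refine le_of_eq_of_le (lintegral_congr_ae ?_) b
  filter_upwards [hhG] with z hz
  rw [hz]
  have : (wcP N m k z : ℝ) * G (N ^ k • z) - wcP N m k z
    = (wcP N m k z : ℝ) * (G (N ^ k • z) - 1) := by ring
  rw [this, enorm_mul]
  congr 1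
  simp

lemma wc_pow (N : ℕ) (hN : 2 ≤ N) (m : Circle2π → ℂ)
    (S : Lp ℂ 2 haarT →L[ℂ] Lp ℂ 2 haarT)
    (hS : ∀ ζ : Lp ℂ 2 haarT, ⇑(S ζ) =ᵐ[haarT] fun z => m z * ζ (N • z))
    (k : ℕ) (η : Lp ℂ 2 haarT) :
    ∀ᵐ z ∂haarT, ‖(S ^ k) η z‖ ^ 2 = wcP N m k z * ‖η (N ^ k • z)‖ ^ 2 := by
  induction k with
  | zero => simp [wcP]
  | succ k ih =>
    have hq := (wc_mp N (by omega)).quasiMeasurePreserving.ae ih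
    rw [pow_succ']
    filter_upwards [hS ((S ^ k) η), hq] with z h1 h2
    have h3 : (S * S ^ k) η = S ((S ^ k) η) := rfl
    rw [h3, h1, norm_mul, mul_pow, h2, wcP_succ, pow_succ N k, mul_smul]
    push_cast
    ring

lemma wc_norm (ξ : Lp ℂ 2 haarT) (hξ_norm : ‖ξ‖ = 1) : ∫ z, ‖ξ z‖ ^ 2 ∂haarT = 1 := by
  have e := MeasureTheory.L2.inner_def (𝕜 := ℂ) ξ ξ
  rw [inner_self_eq_norm_sq_to_K, hξ_norm] at e
  simp_rw [inner_self_eq_norm_sq_to_K] at e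
  have e' : ∫ z, ((‖ξ z‖ ^ 2 : ℝ) : ℂ) ∂haarT = 1 := by
    simpa using e.symm
  rw [integral_complex_ofReal] at e'
  exact_mod_cast e'

/-- **Lemma 3.2.** If the unitary part of the Wold decomposition of
`(S_m ξ)(z) = m(z) ξ(z^N)` is nonzero and `ξ` is a unit vector in it, then
`|ξ(z)|² = lim_k ∏_{n=0}^{k} |m(z^{Nⁿ})|²` a.e., and `|ξ(z)| = 1 = |m(z)|` a.e. -/
theorem unit_vector_in_unitary_part_of_weighted_composition
    (N : ℕ) (hN : 2 ≤ N)
    (m : Circle2π → ℂ) (hm_meas : Measurable m)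
    -- the isometry condition: `(1/N) ∑_{w^N = z} |m(w)|² = 1` a.e.
    (hiso : ∀ᵐ z ∂haarT,
      (1 / N : ℝ) * ∑ k : Fin N, ‖m (z + (((k : ℕ) : ℝ) * (2 * Real.pi / N) : ℝ))‖ ^ 2 = 1)
    -- the operator `S_m` on `L²(𝕋)`
    (S : Lp ℂ 2 haarT →L[ℂ] Lp ℂ 2 haarT)
    (hS : ∀ ζ : Lp ℂ 2 haarT, ⇑(S ζ) =ᵐ[haarT] fun z => m z * ζ (N • z))
    -- a unit vector in the unitary subspace `⋂_{k ≥ 1} S^k L²(𝕋)`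
    (ξ : Lp ℂ 2 haarT)
    (hξ_mem : ξ ∈ ⋂ k : ℕ, Set.range ⇑(S ^ (k + 1)))
    (hξ_norm : ‖ξ‖ = 1) :
    (∀ᵐ z ∂haarT,
      Tendsto (fun k : ℕ => ∏ n ∈ Finset.range (k + 1), ‖m ((N ^ n : ℕ) • z)‖ ^ 2)
        atTop (nhds (‖ξ z‖ ^ 2)))
    ∧ (∀ᵐ z ∂haarT, ‖ξ z‖ = 1)
    ∧ (∀ᵐ z ∂haarT, ‖m z‖ = 1) := by
  have hmeas : ∀ η : Lp ℂ 2 haarT, Measurable fun z => ‖η z‖ ^ 2 := fun η =>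
    ((Lp.stronglyMeasurable η).measurable.norm).pow_const 2
  set h : Circle2π → ℝ := fun z => ‖ξ z‖ ^ 2 with hh_def
  have hhm : Measurable h := hmeas ξ
  have hh : Integrable h haarT :=
    (memLp_two_iff_integrable_sq_norm (Lp.aestronglyMeasurable ξ)).mp (Lp.memLp ξ)
  have h1 : ∫ z, h z ∂haarT = 1 := by
    exact wc_norm ξ hξ_norm
  have hmemk : ∀ k : ℕ, ∃ η : Lp ℂ 2 haarT, (S ^ (k + 1)) η = ξ := fun k =>
    Set.mem_iInter.mp hξ_mem k
  have hmix := wc_mixing_real N hN h hh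
  -- convergence of the products in `L¹`
  have hL1 : ∀ ε > 0, ∃ K : ℕ, ∀ k ≥ K,
      ∫⁻ z, ‖h z - wcP N m (k + 1) z‖ₑ ∂haarT ≤ ENNReal.ofReal ε := by
    intro ε hε
    obtain ⟨K, hK⟩ := hmix ε hε
    refine ⟨K, fun k hk => ?_⟩
    obtain ⟨η, hη⟩ := hmemk k
    have hp := wc_pow N hN m S hS (k + 1) η
    rw [hη] at hp
    exact (wc_D N hN m hm_meas hiso (k + 1) h (fun z => ‖η z‖ ^ 2) hh h1 (hmeas η) hp ε
      (hK (k + 1) (by omega))).1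
  -- the fixed point equation
  have hfix : ∀ᵐ z ∂haarT, h z = ‖m z‖ ^ 2 * h (N • z) := by
    have hT : Measurable fun z : Circle2π => N • z := measurable_const_smul N
    have hmm : Measurable fun z => h z - ‖m z‖ ^ 2 * h (N • z) :=
      hhm.sub ((hm_meas.norm.pow_const 2).mul (hhm.comp hT))
    have hz : ∫⁻ z, ‖h z - ‖m z‖ ^ 2 * h (N • z)‖ₑ ∂haarT = 0 := by
      rw [← nonpos_iff_eq_zero]
      refine ENNReal.le_of_forall_pos_le_add fun δ hδ _ => ?_
      obtain ⟨K, hK⟩ := hL1 (δ / 2) (by positivity)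
      have a1 := hK (K + 1) (by omega)
      have a2 := hK K le_rfl
      have hPm := wcP_meas N m hm_meas
      have hPm' : ∀ k, Measurable fun z => (wcP N m k z : ℝ) := fun k =>
        (hPm k).coe_nnreal_real
      rw [← wc_base N hN m hm_meas hiso (fun z => ‖h z - wcP N m (K + 1) z‖ₑ) (hhm.sub (hPm' (K + 1))).enorm] at a2
      calc ∫⁻ z, ‖h z - ‖m z‖ ^ 2 * h (N • z)‖ₑ ∂haarT
          ≤ ∫⁻ z, (‖h z - wcP N m (K + 1 + 1) z‖ₑ
            + (‖m z‖₊ ^ 2 : NNReal) * ‖h (N • z) - wcP N m (K + 1) (N • z)‖ₑ) ∂haarT := by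
            refine lintegral_mono fun z => ?_
            have e : h z - ‖m z‖ ^ 2 * h (N • z) = (h z - wcP N m (K + 1 + 1) z)
              - ((‖m z‖₊ ^ 2 : NNReal) : ℝ) * (h (N • z) - wcP N m (K + 1) (N • z)) := by
              rw [wcP_succ N m (K + 1)]
              push_cast
              ring
            rw [e]
            refine (enorm_sub_le).trans ?_
            rw [enorm_mul]
            gcongr
            simp [enorm_eq_nnnorm]
        _ = _ := lintegral_add_left (hhm.sub (hPm' (K + 1 + 1))).enorm _
        _ ≤ ENNReal.ofReal (δ / 2) + ENNReal.ofReal (δ / 2) := add_le_add a1 a2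
        _ = 0 + δ := by
            rw [← ENNReal.ofReal_add (by positivity) (by positivity), add_halves]
            simp
    rw [lintegral_eq_zero_iff hmm.enorm] at hz
    filter_upwards [hz] with z hz
    simp only [Pi.zero_apply, enorm_eq_zero] at hz
    linarith
  have hfixk : ∀ k : ℕ, ∀ᵐ z ∂haarT, h z = wcP N m k z * h (N ^ k • z) := by
    intro k
    induction k with
    | zero => simp [wcP]
    | succ k ih =>
      have hq := (wc_mp N (by omega)).quasiMeasurePreserving.ae ih
      filter_upwards [hfix, hq] with z e1 e2
      rw [e1, e2, wcP_succ, pow_succ N k, mul_smul]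
      push_cast
      ring
  have hone : ∀ᵐ z ∂haarT, h z = 1 := by
    have hz : ∫⁻ z, ‖h z - 1‖ₑ ∂haarT = 0 := by
      rw [← nonpos_iff_eq_zero]
      refine ENNReal.le_of_forall_pos_le_add fun δ hδ _ => ?_
      obtain ⟨K, hK⟩ := hmix δ (by exact_mod_cast hδ)
      have := (wc_D N hN m hm_meas hiso K h h hh h1 hhm (hfixk K) δ (hK K le_rfl)).2
      simpa using this
    rw [lintegral_eq_zero_iff (hhm.sub_const 1).enorm] at hz
    filter_upwards [hz] with z hz
    simp only [Pi.zero_apply, enorm_eq_zero] at hz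
    linarith
  have hξ1 : ∀ᵐ z ∂haarT, ‖ξ z‖ = 1 := by
    filter_upwards [hone] with z hz
    exact (pow_eq_one_iff_of_nonneg (norm_nonneg _) two_ne_zero).mp hz
  have hm1 : ∀ᵐ z ∂haarT, ‖m z‖ = 1 := by
    filter_upwards [hone, hfix, (wc_mp N (by omega)).quasiMeasurePreserving.ae hone]
      with z e1 e2 e3
    rw [e1, e3, mul_one] at e2
    exact (pow_eq_one_iff_of_nonneg (norm_nonneg _) two_ne_zero).mp e2.symm
  refine ⟨?_, hξ1, hm1⟩
  have hall : ∀ᵐ z ∂haarT, ∀ n : ℕ, ‖m ((N ^ n : ℕ) • z)‖ = 1 := by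
    rw [ae_all_iff]
    intro n
    have hq := (wc_mp (N ^ n) (by positivity)).quasiMeasurePreserving.ae hm1
    exact hq
  filter_upwards [hξ1, hall] with z e1 e2
  simp [e1, e2]
end
end
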